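/- Let (M, (W_j), (S_i^j)) be an exact-repair regenerating code with parameters (n,k,d) and secondary parameters (B,α,β), where n ≥ d+1, and let p be an integer with 2 ≤ p ≤ k−2. Then both 3B ≤ 2B_p + B_{p+1} − β and 3B ≤ 2B_p + B_{p−1} − β. -/

import Mathlib

open Finset

/-- Shannon entropy (base 2) of a finitely-valued random variable `X` on a finite
probability space with mass function `P`. -/
noncomputable def entH {Ω S : Type*} [Fintype Ω] (P : Ω → ℝ) (X : Ω → S) : ℝ :=
  letI := Classical.decEq S
  ∑ s ∈ Finset.univ.image X,
    -((∑ ω ∈ Finset.univ.filter (fun ω => X ω = s), P ω) *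
       Real.logb 2 (∑ ω ∈ Finset.univ.filter (fun ω => X ω = s), P ω))

/-- Conditional entropy `H(X | Y) = H(X, Y) - H(Y)`. -/
noncomputable def condH {Ω S T : Type*} [Fintype Ω] (P : Ω → ℝ) (X : Ω → S) (Y : Ω → T) : ℝ :=
  entH P (fun ω => (X ω, Y ω)) - entH P Y

/-- The joint random variable `W_J = (W_j : j ∈ J)`. -/
def jointW {Ω : Type*} {n : ℕ} {σW : Fin n → Type*} (W : ∀ j, Ω → σW j)
    (J : Finset (Fin n)) : Ω → ∀ j : J, σW j.1 :=
  fun ω j => W j.1 ω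

/-- The joint random variable `(S_i^j : (i,j) ∈ E)` for a set `E` of pairs. -/
def jointS {Ω : Type*} {n : ℕ} {σS : Fin n → Fin n → Type*} (S : ∀ i j, Ω → σS i j)
    (E : Finset (Fin n × Fin n)) : Ω → ∀ e : E, σS e.1.1 e.1.2 :=
  fun ω e => S e.1.1 e.1.2 ω

/-- The joint random variable `S_I^j = (S_i^j : i ∈ I)`. -/
def jointSto {Ω : Type*} {n : ℕ} {σS : Fin n → Fin n → Type*} (S : ∀ i j, Ω → σS i j)
    (I : Finset (Fin n)) (j : Fin n) : Ω → ∀ i : I, σS i.1 j :=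
  fun ω i => S i.1 j ω

/-- An exact-repair regenerating code with parameters `(n,k,d)` (with `1 ≤ k ≤ d ≤ n-1`)
and secondary parameters `(B,α,β)`: the file `M`, the stored data `W j` on server `j`
(servers indexed by `Fin n`, server `j` of the paper being index `j-1`), and the helper
information `S i j` sent from server `i` to repair server `j`. -/
structure IsRegenCode {Ω : Type*} [Fintype Ω] (n k d : ℕ) (B α β : ℝ) (P : Ω → ℝ)
    {σM : Type*} {σW : Fin n → Type*} {σS : Fin n → Fin n → Type*}
    (M : Ω → σM) (W : ∀ j, Ω → σW j) (S : ∀ i j, Ω → σS i j) : Prop where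
  prob_nonneg : ∀ ω, 0 ≤ P ω
  prob_sum : ∑ ω, P ω = 1
  hk : 1 ≤ k
  hkd : k ≤ d
  hdn : d + 1 ≤ n
  hB : 0 ≤ B
  hα : 0 ≤ α
  hβ : 0 ≤ β
  hMB : entH P M = B
  hWα : ∀ j, entH P (W j) = α
  hWM : ∀ j, condH P (W j) M = 0
  hMW : ∀ J : Finset (Fin n), k ≤ J.card → condH P M (jointW W J) = 0
  hSβ : ∀ i j, i ≠ j → entH P (S i j) = β
  hSW : ∀ i j, i ≠ j → condH P (S i j) (W i) = 0
  hWS : ∀ (j : Fin n) (I : Finset (Fin n)), d ≤ I.card → j ∉ I →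
    condH P (W j) (jointSto S I j) = 0

/-- `B_q = qα + ((k-q)(k-q-1)/2)β + (d+1-k)(k-q)β`. -/
noncomputable def Bfun (k d q : ℕ) (α β : ℝ) : ℝ :=
  (q : ℝ) * α + (((k - q) * (k - q - 1) : ℕ) : ℝ) / 2 * β
    + (((d + 1 - k) * (k - q) : ℕ) : ℝ) * β

/-!
Only the polymatroid axioms of the joint entropies `H(W_J, S_E)` matter. Fix disjoint sets `Q`, `A`
of servers, a server `u` outside them, and let `T` be the messages that `u` sends to `A`.

* `T` is a function of `W_u`, so submodularity exchanges `(Q ∪ A, T)` and `(Q ∪ {u}, T)` for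
  `Q ∪ A ∪ {u}` and `(Q, T)`. Decoding from `(Q, T)` costs fewer messages than decoding from `Q`,
  because each element of `T` saves one message in the repair of a server of `A`.
* A message from `u` to `v` may be taken as one of the messages repairing `v` from `W_J`, hence
  `H(S_u^v | W_J, W_v) ≤ H(W_J) + (d - |J|)β - H(W_J, W_v)`. Summed over `v ∈ A`, for suitable sets
  `J`, this bounds `H(W_{Q ∪ A}, T)`.

The two bounds are the cases `|A| = 2`, `|Q| = p - 1` and `|A| = 3`, `|Q| = p - 2`.
-/

section Entropy

variable {Ω S T U : Type*} [Fintype Ω] {P : Ω → ℝ} {X : Ω → S} {Y : Ω → T} {Z : Ω → U}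

open scoped Classical in
/-- The probability of the event `X = s` under the mass function `P`. -/
noncomputable def probEq (P : Ω → ℝ) (X : Ω → S) (s : S) : ℝ :=
  ∑ ω with X ω = s, P ω

lemma probEq_eq_sum [DecidableEq S] (P : Ω → ℝ) (X : Ω → S) (s : S) :
    probEq P X s = ∑ ω with X ω = s, P ω := by
  rw [probEq]
  congr!

lemma probEq_nonneg (hP : ∀ ω, 0 ≤ P ω) (X : Ω → S) (s : S) : 0 ≤ probEq P X s :=
  sum_nonneg fun ω _ => hP ω

lemma probEq_pos (hP : ∀ ω, 0 ≤ P ω) (X : Ω → S) {ω : Ω} (hω : 0 < P ω) :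
    0 < probEq P X (X ω) := by
  classical
  exact hω.trans_le (single_le_sum (fun a _ => hP a) (mem_filter.2 ⟨mem_univ ω, rfl⟩))

lemma probEq_le_probEq_of_factorsThrough (hP : ∀ ω, 0 ≤ P ω) (h : Y.FactorsThrough X) (ω : Ω) :
    probEq P X (X ω) ≤ probEq P Y (Y ω) := by
  classical
  exact sum_le_sum_of_subset_of_nonneg (monotone_filter_right _ fun _ _ ha => h ha)
    fun a _ _ => hP a

lemma entH_eq_sum (P : Ω → ℝ) (X : Ω → S) :
    entH P X = -∑ ω, P ω * Real.logb 2 (probEq P X (X ω)) := by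
  classical
  rw [entH, ← sum_neg_distrib, ← sum_fiberwise_of_maps_to (g := X) (t := univ.image X)
    fun ω hω => mem_image_of_mem X hω]
  refine sum_congr (by congr!) fun s _ => ?_
  rw [sum_mul, ← sum_neg_distrib]
  refine sum_congr (by congr!) fun ω hω => ?_
  rw [(mem_filter.1 hω).2, probEq]

lemma entH_le_entH_of_factorsThrough (hP : ∀ ω, 0 ≤ P ω) (h : Y.FactorsThrough X) :
    entH P Y ≤ entH P X := by
  rw [entH_eq_sum, entH_eq_sum, neg_le_neg_iff]
  refine sum_le_sum fun ω _ => ?_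
  rcases (hP ω).eq_or_lt with h0 | hpos
  · simp [← h0]
  · exact mul_le_mul_of_nonneg_left (Real.logb_le_logb_of_le one_lt_two
      (probEq_pos hP X hpos) (probEq_le_probEq_of_factorsThrough hP h ω)) (hP ω)

lemma entH_eq_zero_of_subsingleton [Subsingleton S] (hP : ∑ ω, P ω = 1) (X : Ω → S) :
    entH P X = 0 := by
  classical
  have hprob : ∀ s, probEq P X s = 1 := fun s => by
    rw [← hP, probEq_eq_sum, filter_true_of_mem fun ω _ => Subsingleton.elim _ _]
  simp [entH_eq_sum, hprob]

lemma entH_le_of_condH_eq_zero (hP : ∀ ω, 0 ≤ P ω) {R : Type*} {V : Ω → R}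
    (hXY : condH P X Y = 0) (hV : V.FactorsThrough fun ω => (X ω, Y ω))
    (hY : Y.FactorsThrough Z) : entH P V ≤ entH P Z :=
  calc entH P V ≤ entH P fun ω => (X ω, Y ω) := entH_le_entH_of_factorsThrough hP hV
    _ = entH P Y := sub_eq_zero.1 hXY
    _ ≤ entH P Z := entH_le_entH_of_factorsThrough hP hY

lemma sum_mul_logb_nonpos {ι : Type*} {s : Finset ι} {w r : ι → ℝ} {b : ℝ} (hb : 1 < b)
    (hw : ∀ i ∈ s, 0 ≤ w i) (hr : ∀ i ∈ s, 0 < w i → 0 < r i)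
    (hsum : ∑ i ∈ s, w i * r i ≤ ∑ i ∈ s, w i) : ∑ i ∈ s, w i * Real.logb b (r i) ≤ 0 := by
  have hlog : ∑ i ∈ s, w i * Real.log (r i) ≤ ∑ i ∈ s, (w i * r i - w i) := by
    refine sum_le_sum fun i hi => ?_
    rcases (hw i hi).eq_or_lt with h0 | hpos
    · simp [← h0]
    · rw [← mul_sub_one]
      exact mul_le_mul_of_nonneg_left (Real.log_le_sub_one_of_pos (hr i hi hpos)) hpos.le
  rw [sum_sub_distrib] at hlog
  simp only [Real.logb, ← mul_div_assoc, ← sum_div]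
  exact div_nonpos_of_nonpos_of_nonneg (by linarith) (Real.log_pos hb).le

lemma sum_div_probEq_le_one [DecidableEq S] (P : Ω → ℝ) (X : Ω → S) (s : S) :
    ∑ ω with X ω = s, P ω / probEq P X (X ω) ≤ 1 := by
  calc ∑ ω with X ω = s, P ω / probEq P X (X ω)
      = ∑ ω with X ω = s, P ω / probEq P X s :=
        sum_congr rfl fun ω hω => by rw [(mem_filter.1 hω).2]
    _ = probEq P X s / probEq P X s := by rw [← sum_div, probEq_eq_sum]
    _ ≤ 1 := div_self_le_one _

lemma sum_mul_probEq_div_probEq_prod_le [DecidableEq T] (hP : ∀ ω, 0 ≤ P ω)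
    (hX : Z.FactorsThrough X) (hY : Z.FactorsThrough Y) (b : Ω) :
    ∑ ω with Y ω = Y b, P ω / probEq P (fun a => (X a, Y a)) (X ω, Y ω) * probEq P X (X ω)
      ≤ probEq P Z (Z b) := by
  classical
  let q : Ω → ℝ := fun ω => P ω / probEq P (fun a => (X a, Y a)) (X ω, Y ω)
  calc ∑ ω with Y ω = Y b, q ω * probEq P X (X ω)
      = ∑ ω with Y ω = Y b, ∑ a with X a = X ω, q ω * P a := by
        simp only [probEq_eq_sum P X, mul_sum]
    _ = ∑ a with Z a = Z b, ∑ ω with (X ω, Y ω) = (X a, Y b), q ω * P a := by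
        refine sum_comm' fun ω a => ?_
        simp only [mem_filter, mem_univ, true_and, Prod.mk.injEq]
        exact ⟨fun ⟨hωb, haω⟩ => ⟨⟨haω.symm, hωb⟩, (hX haω).trans (hY hωb)⟩,
          fun ⟨⟨hωa, hωb⟩, _⟩ => ⟨hωb, hωa.symm⟩⟩
    _ ≤ ∑ a with Z a = Z b, P a := by
        refine sum_le_sum fun a _ => ?_
        rw [← sum_mul]
        exact mul_le_of_le_one_left (hP a)
          (sum_div_probEq_le_one P (fun ω => (X ω, Y ω)) (X a, Y b))
    _ = probEq P Z (Z b) := (probEq_eq_sum P Z (Z b)).symm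

lemma sum_mul_probEq_ratio_le (hP : ∀ ω, 0 ≤ P ω) (hX : Z.FactorsThrough X)
    (hY : Z.FactorsThrough Y) :
    ∑ ω, P ω * (probEq P X (X ω) * probEq P Y (Y ω) /
      (probEq P (fun a => (X a, Y a)) (X ω, Y ω) * probEq P Z (Z ω))) ≤ ∑ ω, P ω := by
  classical
  let q : Ω → ℝ := fun ω => P ω / probEq P (fun a => (X a, Y a)) (X ω, Y ω) * probEq P X (X ω)
  calc ∑ ω, P ω * (probEq P X (X ω) * probEq P Y (Y ω) /
          (probEq P (fun a => (X a, Y a)) (X ω, Y ω) * probEq P Z (Z ω)))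
      = ∑ ω, q ω / probEq P Z (Z ω) * probEq P Y (Y ω) := by
        refine sum_congr rfl fun ω _ => ?_
        simp only [q]
        ring
    _ = ∑ ω, ∑ b with Y b = Y ω, q ω / probEq P Z (Z ω) * P b := by
        refine sum_congr rfl fun ω _ => ?_
        rw [← mul_sum, probEq_eq_sum P Y]
    _ = ∑ b, ∑ ω with Y ω = Y b, q ω / probEq P Z (Z ω) * P b :=
        sum_comm' fun ω b => by simp [eq_comm]
    _ = ∑ b, (∑ ω with Y ω = Y b, q ω) / probEq P Z (Z b) * P b := by
        refine sum_congr rfl fun b _ => ?_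
        rw [sum_div, sum_mul]
        refine sum_congr rfl fun ω hω => ?_
        rw [hY (mem_filter.1 hω).2]
    _ ≤ ∑ b, P b := by
        refine sum_le_sum fun b _ => mul_le_of_le_one_left (hP b) ?_
        exact div_le_one_of_le₀ (sum_mul_probEq_div_probEq_prod_le hP hX hY b)
          (probEq_nonneg hP Z _)

theorem entH_prod_add_entH_le (hP : ∀ ω, 0 ≤ P ω) (hX : Z.FactorsThrough X)
    (hY : Z.FactorsThrough Y) :
    entH P (fun ω => (X ω, Y ω)) + entH P Z ≤ entH P X + entH P Y := by
  let XY : Ω → S × T := fun ω => (X ω, Y ω)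
  have hgibbs := sum_mul_logb_nonpos one_lt_two (fun ω _ => hP ω)
    (fun ω _ hω => div_pos (mul_pos (probEq_pos hP X hω) (probEq_pos hP Y hω))
      (mul_pos (probEq_pos hP XY hω) (probEq_pos hP Z hω)))
    (sum_mul_probEq_ratio_le hP hX hY)
  have hlog : ∀ ω, P ω * Real.logb 2 (probEq P X (X ω) * probEq P Y (Y ω) /
      (probEq P XY (XY ω) * probEq P Z (Z ω)))
      = P ω * Real.logb 2 (probEq P X (X ω)) + P ω * Real.logb 2 (probEq P Y (Y ω))
        - (P ω * Real.logb 2 (probEq P XY (XY ω)) + P ω * Real.logb 2 (probEq P Z (Z ω))) := by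
    intro ω
    rcases (hP ω).eq_or_lt with h0 | hω
    · simp [← h0]
    have hx := (probEq_pos hP X hω).ne'
    have hy := (probEq_pos hP Y hω).ne'
    have hxy := (probEq_pos hP XY hω).ne'
    have hz := (probEq_pos hP Z hω).ne'
    rw [Real.logb_div (mul_ne_zero hx hy) (mul_ne_zero hxy hz), Real.logb_mul hx hy,
      Real.logb_mul hxy hz]
    ring
  simp only [hlog, sum_sub_distrib, sum_add_distrib] at hgibbs
  simp only [entH_eq_sum]
  linarith

end Entropy

/-- The polymatroid axioms of the joint entropies `g J E = H(W_J, S_E)` of an exact-repair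
regenerating code whose servers are indexed by `ι`, with the normalisations of `W_j` and `S_i^j`.
The file `M` does not appear: `decode` only keeps that any `k` servers carry entropy at
least `B`. -/
structure IsRepairPolymatroid {ι : Type*} [Fintype ι] [DecidableEq ι] (k d : ℕ) (B α β : ℝ)
    (g : Finset ι → Finset (ι × ι) → ℝ) : Prop where
  k_le_d : k ≤ d
  d_lt_card : d < Fintype.card ι
  empty : g ∅ ∅ = 0
  mono : ∀ {J₁ J₂ E₁ E₂}, J₁ ⊆ J₂ → E₁ ⊆ E₂ → g J₁ E₁ ≤ g J₂ E₂
  submodular : ∀ J₁ J₂ E₁ E₂, g (J₁ ∪ J₂) (E₁ ∪ E₂) + g (J₁ ∩ J₂) (E₁ ∩ E₂) ≤ g J₁ E₁ + g J₂ E₂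
  node_le : ∀ j, g {j} ∅ ≤ α
  helper_le : ∀ {i j}, i ≠ j → g ∅ {(i, j)} ≤ β
  helper_of_node : ∀ {i j}, i ≠ j → g {i} {(i, j)} ≤ g {i} ∅
  repair : ∀ {I : Finset ι} {j}, d ≤ #I → j ∉ I → g {j} (I ×ˢ {j}) ≤ g ∅ (I ×ˢ {j})
  decode : ∀ {J : Finset ι}, k ≤ #J → B ≤ g J ∅

section Code

variable {Ω : Type*} {n k d : ℕ} {B α β : ℝ} {P : Ω → ℝ}
  {σM : Type*} {σW : Fin n → Type*} {σS : Fin n → Fin n → Type*}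
  {M : Ω → σM} {W : ∀ j, Ω → σW j} {S : ∀ i j, Ω → σS i j}

/-- The joint random variable `(W_J, S_E)`. -/
def jointWS (W : ∀ j, Ω → σW j) (S : ∀ i j, Ω → σS i j) (J : Finset (Fin n))
    (E : Finset (Fin n × Fin n)) : Ω → (∀ j : J, σW j.1) × (∀ e : E, σS e.1.1 e.1.2) :=
  fun ω => (jointW W J ω, jointS S E ω)

lemma jointWS_eq_jointWS_iff {J : Finset (Fin n)} {E : Finset (Fin n × Fin n)} {ω ω' : Ω} :
    jointWS W S J E ω = jointWS W S J E ω' ↔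
      (∀ j ∈ J, W j ω = W j ω') ∧ ∀ i j, (i, j) ∈ E → S i j ω = S i j ω' := by
  simp [jointWS, jointW, jointS, funext_iff]

lemma jointWS_factorsThrough_of_subset {J₁ J₂ : Finset (Fin n)} {E₁ E₂ : Finset (Fin n × Fin n)}
    (hJ : J₁ ⊆ J₂) (hE : E₁ ⊆ E₂) :
    (jointWS W S J₁ E₁).FactorsThrough (jointWS W S J₂ E₂) := by
  intro ω ω' h
  rw [jointWS_eq_jointWS_iff] at h ⊢
  exact ⟨fun j hj => h.1 j (hJ hj), fun i j he => h.2 i j (hE he)⟩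

lemma entH_jointWS_submodular [Fintype Ω] (hP : ∀ ω, 0 ≤ P ω) (J₁ J₂ : Finset (Fin n))
    (E₁ E₂ : Finset (Fin n × Fin n)) :
    entH P (jointWS W S (J₁ ∪ J₂) (E₁ ∪ E₂)) + entH P (jointWS W S (J₁ ∩ J₂) (E₁ ∩ E₂))
      ≤ entH P (jointWS W S J₁ E₁) + entH P (jointWS W S J₂ E₂) := by
  have hunion : (jointWS W S (J₁ ∪ J₂) (E₁ ∪ E₂)).FactorsThrough
      fun ω => (jointWS W S J₁ E₁ ω, jointWS W S J₂ E₂ ω) := by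
    intro ω ω' h
    simp only [Prod.mk.injEq, jointWS_eq_jointWS_iff] at h
    simp only [jointWS_eq_jointWS_iff, mem_union]
    exact ⟨fun j hj => hj.elim (h.1.1 j) (h.2.1 j),
      fun i j he => he.elim (h.1.2 i j) (h.2.2 i j)⟩
  have hpair := entH_prod_add_entH_le hP
    (jointWS_factorsThrough_of_subset (W := W) (S := S)
      (inter_subset_left (s₁ := J₁) (s₂ := J₂)) (inter_subset_left (s₁ := E₁) (s₂ := E₂)))
    (jointWS_factorsThrough_of_subset inter_subset_right inter_subset_right)
  linarith [entH_le_entH_of_factorsThrough hP hunion]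

lemma IsRegenCode.isRepairPolymatroid [Fintype Ω] (hcode : IsRegenCode n k d B α β P M W S) :
    IsRepairPolymatroid k d B α β fun J E => entH P (jointWS W S J E) where
  k_le_d := hcode.hkd
  d_lt_card := by simpa using hcode.hdn
  empty := entH_eq_zero_of_subsingleton hcode.prob_sum _
  mono hJ hE :=
    entH_le_entH_of_factorsThrough hcode.prob_nonneg (jointWS_factorsThrough_of_subset hJ hE)
  submodular := entH_jointWS_submodular hcode.prob_nonneg
  node_le j := by
    rw [← hcode.hWα j]
    refine entH_le_entH_of_factorsThrough hcode.prob_nonneg fun ω ω' h => ?_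
    simpa [jointWS_eq_jointWS_iff] using h
  helper_le {i j} hij := by
    rw [← hcode.hSβ i j hij]
    refine entH_le_entH_of_factorsThrough hcode.prob_nonneg fun ω ω' h => ?_
    simpa [jointWS_eq_jointWS_iff] using h
  helper_of_node {i j} hij := by
    refine entH_le_of_condH_eq_zero hcode.prob_nonneg (hcode.hSW i j hij) ?_ ?_
    · intro ω ω' h
      simpa [jointWS_eq_jointWS_iff, and_comm] using h
    · intro ω ω' h
      simpa [jointWS_eq_jointWS_iff] using h
  repair {I j} hI hj := by
    refine entH_le_of_condH_eq_zero hcode.prob_nonneg (hcode.hWS j I hI hj) ?_ ?_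
    · intro ω ω' h
      simpa [jointWS_eq_jointWS_iff, jointSto, funext_iff] using h
    · intro ω ω' h
      simpa [jointWS_eq_jointWS_iff, jointSto, funext_iff] using h
  decode {J} hJ := by
    rw [← hcode.hMB]
    refine entH_le_of_condH_eq_zero hcode.prob_nonneg (hcode.hMW J hJ) ?_ ?_
    · exact fun ω ω' h => congrArg Prod.fst h
    · exact fun ω ω' h => congrArg Prod.fst h

end Code

lemma Bfun_self (k d : ℕ) (α β : ℝ) : Bfun k d k α β = k * α := by
  simp [Bfun]

lemma Bfun_add_eq_Bfun_succ_add {k d q : ℕ} (hqk : q < k) (hkd : k ≤ d) (α β : ℝ) :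
    Bfun k d q α β + α = Bfun k d (q + 1) α β + (d - q) * β := by
  obtain ⟨m, rfl⟩ := Nat.exists_eq_add_of_lt hqk
  obtain ⟨l, rfl⟩ := Nat.exists_eq_add_of_le hkd
  have h₁ : q + m + 1 - q = m + 1 := by omega
  have h₂ : q + m + 1 - (q + 1) = m := by omega
  have h₃ : q + m + 1 + l + 1 - (q + m + 1) = l + 1 := by omega
  simp only [Bfun, h₁, h₂, h₃, Nat.add_sub_cancel]
  rcases m with _ | m
  · simp
    ring
  · push_cast [Nat.add_sub_cancel]
    ring

namespace IsRepairPolymatroid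

variable {ι : Type*} [Fintype ι] [DecidableEq ι] {k d : ℕ} {B α β : ℝ}
  {g : Finset ι → Finset (ι × ι) → ℝ}

lemma exists_notMem (hg : IsRepairPolymatroid k d B α β g) {J : Finset ι} (hJ : #J ≤ d) :
    ∃ v, v ∉ J := by
  obtain ⟨v, -, hv⟩ := exists_mem_notMem_of_card_lt_card (hJ.trans_lt hg.d_lt_card)
  exact ⟨v, hv⟩

lemma submodular_of_subset (hg : IsRepairPolymatroid k d B α β g) {J₁ J₂ J J' : Finset ι}
    {E₁ E₂ E E' : Finset (ι × ι)} (hJ : J ⊆ J₁ ∪ J₂) (hE : E ⊆ E₁ ∪ E₂)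
    (hJ' : J' ⊆ J₁ ∩ J₂) (hE' : E' ⊆ E₁ ∩ E₂) : g J E + g J' E' ≤ g J₁ E₁ + g J₂ E₂ :=
  (add_le_add (hg.mono hJ hE) (hg.mono hJ' hE')).trans (hg.submodular J₁ J₂ E₁ E₂)

lemma insert_node_le (hg : IsRepairPolymatroid k d B α β g) (j : ι) (J : Finset ι)
    (E : Finset (ι × ι)) : g (insert j J) E ≤ g J E + α := by
  have hsub := hg.submodular_of_subset (J₁ := J) (J₂ := {j}) (E₁ := E) (E₂ := ∅)
    (J := insert j J) (E := E) (by grind) (by simp) (empty_subset _) (empty_subset _)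
  linarith [hg.node_le j, hg.empty]

lemma nodes_le (hg : IsRepairPolymatroid k d B α β g) (J : Finset ι) : g J ∅ ≤ #J * α := by
  induction J using Finset.induction_on with
  | empty => simp [hg.empty]
  | insert j J hj ih =>
    rw [card_insert_of_notMem hj]
    push_cast
    linarith [hg.insert_node_le j J ∅]

lemma union_helpers_le_add (hg : IsRepairPolymatroid k d B α β g) (J : Finset ι)
    (E : Finset (ι × ι)) {T : Finset (ι × ι)} (hT : ∀ e ∈ T, e.1 ≠ e.2) :
    g J (E ∪ T) ≤ g J E + #T * β := by
  induction T using Finset.induction_on with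
  | empty => simp
  | insert e T he ih =>
    have hsub := hg.submodular_of_subset (J₁ := J) (J₂ := ∅) (E₁ := E ∪ T) (E₂ := {e})
      (J := J) (E := E ∪ insert e T) (by simp) (by grind) (empty_subset _) (empty_subset _)
    rw [card_insert_of_notMem he]
    push_cast
    linarith [ih fun e' he' => hT e' (mem_insert_of_mem he'),
      hg.helper_le (hT e (mem_insert_self e T)), hg.empty]

lemma union_helpers_le_of_nodes (hg : IsRepairPolymatroid k d B α β g) {J : Finset ι}
    (E : Finset (ι × ι)) {T : Finset (ι × ι)} (hT : ∀ e ∈ T, e.1 ∈ J ∧ e.1 ≠ e.2) :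
    g J (E ∪ T) ≤ g J E := by
  induction T using Finset.induction_on with
  | empty => simp
  | insert e T _ ih =>
    obtain ⟨heJ, hne⟩ := hT e (mem_insert_self e T)
    have hsub := hg.submodular_of_subset (J₁ := J) (J₂ := {e.1}) (E₁ := E ∪ T) (E₂ := {e})
      (J := J) (E := E ∪ insert e T) (J' := {e.1}) (E' := ∅)
      subset_union_left (by grind) (by simpa using heJ) (empty_subset _)
    linarith [ih fun e' he' => hT e' (mem_insert_of_mem he'), hg.helper_of_node hne]

lemma insert_node_le_of_repair (hg : IsRepairPolymatroid k d B α β g) {I : Finset ι} {v : ι}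
    {E : Finset (ι × ι)} (hI : d ≤ #I) (hv : v ∉ I) (hIE : I ×ˢ {v} ⊆ E) (J : Finset ι) :
    g (insert v J) E ≤ g J E := by
  have hsub := hg.submodular_of_subset (J₁ := J) (J₂ := {v}) (E₁ := E) (E₂ := I ×ˢ {v})
    (J := insert v J) (E := E) (J' := ∅) (E' := I ×ˢ {v})
    (by grind) subset_union_left (empty_subset _) (subset_inter hIE subset_rfl)
  linarith [hg.repair hI hv]

/-- Extend `K` to a set `I` of `d` helpers: only the messages from `I \ K` have to be bought. -/
lemma insert_node_le_add (hg : IsRepairPolymatroid k d B α β g) {J K : Finset ι} {v : ι}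
    {E : Finset (ι × ι)} (hK : ∀ i ∈ K, i ∈ J ∨ (i, v) ∈ E) (hv : v ∉ K) (hKd : #K ≤ d) :
    g (insert v J) E ≤ g J E + (d - #K) * β := by
  obtain ⟨I, hKI, hIv, hI⟩ := exists_subsuperset_card_eq
    (subset_erase.2 ⟨subset_univ K, hv⟩) hKd (by
      rw [card_erase_of_mem (mem_univ v), card_univ]
      exact Nat.le_sub_one_of_lt hg.d_lt_card)
  have hvI : v ∉ I := fun h => by simpa using hIv h
  let bought : Finset (ι × ι) := (I \ K) ×ˢ {v}
  let known : Finset (ι × ι) := (J ∩ K) ×ˢ {v}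
  have hcard : (#bought : ℝ) = d - #K := by
    rw [card_product, card_singleton, mul_one, card_sdiff_of_subset hKI, hI, Nat.cast_sub hKd]
  calc g (insert v J) E ≤ g (insert v J) (E ∪ bought ∪ known) :=
        hg.mono subset_rfl (subset_union_left.trans subset_union_left)
    _ ≤ g J (E ∪ bought ∪ known) :=
        hg.insert_node_le_of_repair hI.ge hvI (by grind) J
    _ ≤ g J (E ∪ bought) := hg.union_helpers_le_of_nodes _ (by grind)
    _ ≤ g J E + #bought * β := hg.union_helpers_le_add J E (by grind)
    _ = g J E + (d - #K) * β := by rw [hcard]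

lemma add_le_add_Bfun (hg : IsRepairPolymatroid k d B α β g) {J : Finset ι}
    (E : Finset (ι × ι)) (hJ : #J ≤ k) : B + #J * α ≤ g J E + Bfun k d #J α β := by
  induction hm : k - #J generalizing J with
  | zero =>
    have hJk : #J = k := by omega
    rw [hJk, Bfun_self]
    linarith [hg.decode hJk.ge, hg.mono (subset_refl J) (empty_subset E)]
  | succ m ih =>
    obtain ⟨v, hv⟩ := hg.exists_notMem (hJ.trans hg.k_le_d)
    have hcard := card_insert_of_notMem hv
    have hrepair := hg.insert_node_le_add (E := E) (fun i hi => Or.inl hi) hv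
      (hJ.trans hg.k_le_d)
    have hdecode := ih (J := insert v J) (by omega) (by omega)
    have hB := Bfun_add_eq_Bfun_succ_add (q := #J) (by omega) hg.k_le_d α β
    rw [hcard] at hdecode
    push_cast at hdecode
    linarith

/-- While the servers of `A` are repaired one after the other, each message from `u` to `A`
replaces a message that would have to be bought. -/
lemma add_le_add_Bfun_of_star (hg : IsRepairPolymatroid k d B α β g) {J A : Finset ι} {u : ι}
    {E : Finset (ι × ι)} (huJ : u ∉ J) (huA : u ∉ A) (hJA : Disjoint J A)
    (hE : {u} ×ˢ A ⊆ E) (hk : #J + #A ≤ k) :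
    B + #J * α + #A * β ≤ g J E + Bfun k d #J α β := by
  induction A using Finset.induction_on generalizing J with
  | empty => simpa using hg.add_le_add_Bfun E (J := J) (by simpa using hk)
  | insert v A hvA ih =>
    have hvJ : v ∉ J := by grind
    rw [card_insert_of_notMem hvA] at hk ⊢
    have hcard := card_insert_of_notMem hvJ
    have hkd := hg.k_le_d
    have hrepair := hg.insert_node_le_add (J := J) (K := insert u J) (v := v) (E := E)
      (by grind) (by grind) (by rw [card_insert_of_notMem huJ]; omega)
    have hdecode := ih (J := insert v J) (by grind) (by grind) (by grind) (by grind) (by omega)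
    have hB := Bfun_add_eq_Bfun_succ_add (q := #J) (by omega) hg.k_le_d α β
    rw [card_insert_of_notMem huJ] at hrepair
    rw [hcard] at hdecode
    push_cast at hrepair hdecode ⊢
    linarith

/-- `H(S_u^v | W_K, S_E) ≤ H(S_u^v | W_J, W_v)`, and the message from `u` to `v` may be taken as
one of those that are bought to repair `v` from `J`. -/
lemma insert_helper_add_le (hg : IsRepairPolymatroid k d B α β g) {J K : Finset ι} {u v : ι}
    (hu : u ∉ J) (hv : v ∉ J) (huv : u ≠ v) (hJd : #J < d) (hJK : insert v J ⊆ K)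
    (E : Finset (ι × ι)) :
    g K (insert (u, v) E) + g (insert v J) ∅ ≤ g K E + g J ∅ + (d - #J) * β := by
  have hsub := hg.submodular_of_subset (J₁ := K) (J₂ := insert v J) (E₁ := E) (E₂ := {(u, v)})
    (J := K) (E := insert (u, v) E) (J' := insert v J) (E' := ∅)
    subset_union_left (by grind) (subset_inter hJK subset_rfl) (empty_subset _)
  have hrepair := hg.insert_node_le_add (J := J) (K := insert u J) (v := v) (E := {(u, v)})
    (by grind) (by grind) (by rw [card_insert_of_notMem hu]; omega)
  have hmessage := hg.union_helpers_le_add J ∅ (T := {(u, v)}) (by simpa using huv)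
  rw [card_insert_of_notMem hu] at hrepair
  rw [empty_union, card_singleton] at hmessage
  push_cast at hrepair hmessage
  linarith

lemma star_exchange (hg : IsRepairPolymatroid k d B α β g) {Q K A : Finset ι} {u : ι}
    (hQK : Q ⊆ K) (huA : u ∉ A) :
    g (insert u K) ∅ + g Q ({u} ×ˢ A) ≤ g K ({u} ×ˢ A) + g (insert u Q) ∅ := by
  have hsub := hg.submodular_of_subset (J₁ := K) (J₂ := insert u Q) (E₁ := {u} ×ˢ A)
    (E₂ := {u} ×ˢ A) (J := insert u K) (E := ∅) (J' := Q) (E' := {u} ×ˢ A)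
    (by grind) (empty_subset _) (by grind) (by simp)
  have hknown := hg.union_helpers_le_of_nodes (J := insert u Q) ∅ (T := {u} ×ˢ A) (by grind)
  rw [empty_union] at hknown
  linarith

lemma three_mul_add_le_star (hg : IsRepairPolymatroid k d B α β g) {Q A : Finset ι} {u : ι}
    {q r : ℕ} (huQ : u ∉ Q) (huA : u ∉ A) (hQA : Disjoint Q A) (hQ : #Q = q) (hA : #A = r)
    (hk : q + r + 1 ≤ k) :
    3 * B + 2 * (q + r) * α + r * β ≤ g (Q ∪ A) ({u} ×ˢ A) + g (Q ∪ A) ∅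
      + Bfun k d (q + 1) α β + Bfun k d (q + r) α β + Bfun k d (q + r + 1) α β := by
  have hcard : #(Q ∪ A) = q + r := by rw [card_union_of_disjoint hQA, hQ, hA]
  have hcard_u : #(insert u (Q ∪ A)) = q + r + 1 := by
    rw [card_insert_of_notMem (by simp [huQ, huA]), hcard]
  obtain ⟨x, hx⟩ := hg.exists_notMem (hcard_u.trans_le (hk.trans hg.k_le_d))
  simp only [mem_insert, mem_union, not_or] at hx
  have hcard_xQ : #(insert x Q) = q + 1 := by rw [card_insert_of_notMem hx.2.1, hQ]
  have hcard_uQ : #(insert u Q) = q + 1 := by rw [card_insert_of_notMem huQ, hQ]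
  have hexchange := hg.star_exchange (subset_union_left (s₁ := Q) (s₂ := A)) huA
  have hdecode := hg.add_le_add_Bfun (J := Q ∪ A) ∅ (by omega)
  have hdecode_u := hg.add_le_add_Bfun (J := insert u (Q ∪ A)) ∅ (by omega)
  have hdecode_star := hg.add_le_add_Bfun_of_star (J := insert x Q) (A := A) (u := u)
    (by grind) huA (by grind) subset_rfl (by omega)
  have hnode_x := hg.insert_node_le x Q ({u} ×ˢ A)
  have hnodes_u := hg.nodes_le (insert u Q)
  rw [hcard] at hdecode
  rw [hcard_u] at hdecode_u
  rw [hcard_xQ, hA] at hdecode_star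
  rw [hcard_uQ] at hnodes_u
  push_cast at hdecode hdecode_u hdecode_star hnodes_u
  linarith

lemma star_pair_add_le (hg : IsRepairPolymatroid k d B α β g) {J : Finset ι} {a b u : ι}
    (ha : a ∉ J) (hb : b ∉ insert a J) (hu : u ∉ insert b (insert a J)) (hJd : #J + 1 < d) :
    g (insert b (insert a J)) {(u, a), (u, b)} + g (insert b (insert a J)) ∅
      ≤ g (insert a J) ∅ + g (insert b J) ∅ + 2 * (d - #J - 1) * β := by
  simp only [mem_insert, not_or] at hb hu
  have hcard_a := card_insert_of_notMem ha
  have hcard_b := card_insert_of_notMem hb.2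
  have hmessage_a := hg.insert_helper_add_le (J := insert b J) (u := u) (v := a)
    (K := insert b (insert a J)) (by grind) (by grind) hu.2.1 (by omega) (by grind) {(u, b)}
  have hmessage_b := hg.insert_helper_add_le (J := insert a J) (u := u) (v := b)
    (K := insert b (insert a J)) (by grind) (by grind) hu.1 (by omega) subset_rfl ∅
  rw [insert_empty_eq] at hmessage_b
  rw [insert_comm a b, hcard_b] at hmessage_a
  rw [hcard_a] at hmessage_b
  push_cast at hmessage_a hmessage_b
  linarith

lemma star_triple_add_le (hg : IsRepairPolymatroid k d B α β g) {J : Finset ι} {a b c u : ι}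
    (hc : c ∉ J) (ha : a ∉ insert c J) (hb : b ∉ insert a (insert c J))
    (hu : u ∉ insert b (insert a (insert c J))) (hJd : #J + 2 < d) :
    g (insert b (insert a (insert c J))) {(u, c), (u, a), (u, b)}
        + g (insert b (insert a (insert c J))) ∅
      ≤ g (insert b (insert c J)) ∅ + g (insert a J) ∅ + (3 * d - 3 * #J - 5) * β := by
  have hpair := hg.star_pair_add_le ha hb hu (by rw [card_insert_of_notMem hc]; omega)
  rw [card_insert_of_notMem hc] at hpair
  simp only [mem_insert, not_or] at ha hb hu
  have hcard_a := card_insert_of_notMem ha.2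
  have hmessage_c := hg.insert_helper_add_le (J := insert a J) (u := u) (v := c)
    (K := insert b (insert a (insert c J))) (by grind) (by grind) hu.2.2.1 (by omega)
    (by grind) {(u, a), (u, b)}
  rw [insert_comm c a, hcard_a] at hmessage_c
  push_cast at hpair hmessage_c
  linarith

lemma exists_card_eq (hg : IsRepairPolymatroid k d B α β g) {q : ℕ} (hq : q ≤ d) :
    ∃ Q : Finset ι, #Q = q := by
  obtain ⟨Q, -, hQ⟩ := exists_subset_card_eq (s := univ) (hq.trans hg.d_lt_card.le)
  exact ⟨Q, hQ⟩

lemma three_mul_le_succ (hg : IsRepairPolymatroid k d B α β g) {p : ℕ} (hp : 1 ≤ p)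
    (hpk : p + 2 ≤ k) : 3 * B ≤ 2 * Bfun k d p α β + Bfun k d (p + 1) α β - β := by
  obtain ⟨q, rfl⟩ := Nat.exists_eq_add_of_le' hp
  have hkd := hg.k_le_d
  obtain ⟨Q, hQ⟩ := hg.exists_card_eq (q := q) (by omega)
  obtain ⟨a, ha⟩ := hg.exists_notMem (J := Q) (by omega)
  have hcard_a := card_insert_of_notMem ha
  obtain ⟨b, hb⟩ := hg.exists_notMem (J := insert a Q) (by omega)
  have hcard_ab := card_insert_of_notMem hb
  obtain ⟨u, hu⟩ := hg.exists_notMem (J := insert b (insert a Q)) (by omega)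
  have hpair := hg.star_pair_add_le ha hb hu (by omega)
  have hnodes_a := hg.nodes_le (insert a Q)
  have hnodes_b := hg.nodes_le (insert b Q)
  simp only [mem_insert, not_or] at hb hu
  have hstar := hg.three_mul_add_le_star (Q := Q) (A := {a, b}) (u := u) (r := 2)
    hu.2.2 (by simp [hu]) (by simp [ha, hb.2]) hQ (card_pair (Ne.symm hb.1)) (by omega)
  have hunion : Q ∪ {a, b} = insert b (insert a Q) := by grind
  have hleaves : ({u} : Finset ι) ×ˢ {a, b} = {(u, a), (u, b)} := by simp
  have hB₁ := Bfun_add_eq_Bfun_succ_add (q := q + 1) (by omega) hkd α β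
  have hB₂ := Bfun_add_eq_Bfun_succ_add (q := q + 2) (by omega) hkd α β
  rw [hunion, hleaves] at hstar
  rw [hQ] at hpair
  rw [hcard_a, hQ] at hnodes_a
  rw [card_insert_of_notMem hb.2, hQ] at hnodes_b
  push_cast at hstar hnodes_a hnodes_b hB₁ hB₂
  linarith

lemma three_mul_le_pred (hg : IsRepairPolymatroid k d B α β g) {p : ℕ} (hp : 2 ≤ p)
    (hpk : p + 2 ≤ k) : 3 * B ≤ 2 * Bfun k d p α β + Bfun k d (p - 1) α β - β := by
  obtain ⟨q, rfl⟩ := Nat.exists_eq_add_of_le' hp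
  have hkd := hg.k_le_d
  obtain ⟨Q, hQ⟩ := hg.exists_card_eq (q := q) (by omega)
  obtain ⟨c, hc⟩ := hg.exists_notMem (J := Q) (by omega)
  have hcard_c := card_insert_of_notMem hc
  obtain ⟨a, ha⟩ := hg.exists_notMem (J := insert c Q) (by omega)
  have hcard_ca := card_insert_of_notMem ha
  obtain ⟨b, hb⟩ := hg.exists_notMem (J := insert a (insert c Q)) (by omega)
  have hcard_cab := card_insert_of_notMem hb
  obtain ⟨u, hu⟩ := hg.exists_notMem (J := insert b (insert a (insert c Q))) (by omega)
  have htriple := hg.star_triple_add_le hc ha hb hu (by omega)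
  have hnodes_bc := hg.nodes_le (insert b (insert c Q))
  have hnodes_a := hg.nodes_le (insert a Q)
  simp only [mem_insert, not_or] at ha hb hu
  have hstar := hg.three_mul_add_le_star (Q := Q) (A := {c, a, b}) (u := u) (r := 3)
    hu.2.2.2 (by simp [hu]) (by simp [hc, ha.2, hb.2.2]) hQ (by grind) (by omega)
  have hunion : Q ∪ {c, a, b} = insert b (insert a (insert c Q)) := by grind
  have hleaves : ({u} : Finset ι) ×ˢ {c, a, b} = {(u, c), (u, a), (u, b)} := by simp
  have hB₁ := Bfun_add_eq_Bfun_succ_add (q := q + 1) (by omega) hkd α β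
  have hB₂ := Bfun_add_eq_Bfun_succ_add (q := q + 2) (by omega) hkd α β
  have hB₃ := Bfun_add_eq_Bfun_succ_add (q := q + 3) (by omega) hkd α β
  rw [hunion, hleaves] at hstar
  rw [hQ] at htriple
  rw [card_insert_of_notMem (by simp [hb]), hcard_c, hQ] at hnodes_bc
  rw [card_insert_of_notMem ha.2, hQ] at hnodes_a
  push_cast at hstar hnodes_bc hnodes_a hB₁ hB₂ hB₃
  rw [show q + 2 - 1 = q + 1 by omega]
  linarith

end IsRepairPolymatroid

theorem stmt_6_general {ι : Type*} [Fintype ι] [DecidableEq ι] {k d : ℕ} {B α β : ℝ}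
    {g : Finset ι → Finset (ι × ι) → ℝ} (hg : IsRepairPolymatroid k d B α β g)
    (p : ℕ) (hp2 : 2 ≤ p) (hpk : p + 2 ≤ k) :
    3 * B ≤ 2 * Bfun k d p α β + Bfun k d (p + 1) α β - β ∧
    3 * B ≤ 2 * Bfun k d p α β + Bfun k d (p - 1) α β - β :=
  ⟨hg.three_mul_le_succ (by omega) hpk, hg.three_mul_le_pred hp2 hpk⟩

/-- for `2 ≤ p ≤ k - 2`, both `3B ≤ 2B_p + B_{p+1} - β` and
`3B ≤ 2B_p + B_{p-1} - β`. -/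
theorem stmt_6 {Ω : Type*} [Fintype Ω] {n k d : ℕ} {B α β : ℝ} {P : Ω → ℝ}
    {σM : Type*} {σW : Fin n → Type*} {σS : Fin n → Fin n → Type*}
    {M : Ω → σM} {W : ∀ j, Ω → σW j} {S : ∀ i j, Ω → σS i j}
    (hcode : IsRegenCode n k d B α β P M W S)
    (p : ℕ) (hp2 : 2 ≤ p) (hpk : p + 2 ≤ k) :
    3 * B ≤ 2 * Bfun k d p α β + Bfun k d (p + 1) α β - β ∧
    3 * B ≤ 2 * Bfun k d p α β + Bfun k d (p - 1) α β - β :=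
  stmt_6_general hcode.isRepairPolymatroid p hp2 hpk
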